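/- arXiv:hep-th/9512043 — 6 statements merged into one kernel-verified Lean document; each statement's English description precedes it below -/
import Mathlib

section
/- Let Λ be a real 2n×2n matrix, written in n×n blocks as Λ = [[A,B],[C,D]], which is symplectic, i.e. Λᵀ Ω Λ = Ω where Ω = [[0, 1ₙ],[−1ₙ, 0]]. Then for every complex symmetric n×n matrix N such that A + B·N is invertible, the matrix (C + D·N)·(A + B·N)⁻¹ is also symmetric. -/
open Matrix

/-!
The graph of `N` is the column span of the block column `[1; N]`, and it is isotropic for the
standard symplectic form exactly when `N` is symmetric. A symplectic matrix preserves isotropy and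
sends `[1; N]` to `[A + B N; C + D N]`, which is the graph of `(C + D N) (A + B N)⁻¹` up to the
change of basis `(A + B N)⁻¹`.
-/

section Isotropic

variable {l m k R : Type*} [DecidableEq l] [Fintype l] [CommRing R]

/-- The columns of `X` span an isotropic submodule for the standard symplectic form on
`R ^ (l ⊕ l)`. The form is given by Mathlib's `Matrix.J`, which is `-Ω`; the sign does not affect
isotropy. -/
def IsIsotropic (X : Matrix (l ⊕ l) m R) : Prop :=
  Xᵀ * J l R * X = 0

theorem IsIsotropic.mul_right [Fintype m] {X : Matrix (l ⊕ l) m R} (hX : IsIsotropic X)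
    (Y : Matrix m k R) : IsIsotropic (X * Y) := by
  unfold IsIsotropic at hX ⊢
  calc (X * Y)ᵀ * J l R * (X * Y) = Yᵀ * (Xᵀ * J l R * X) * Y := by
        simp only [transpose_mul, Matrix.mul_assoc]
    _ = 0 := by rw [hX, Matrix.mul_zero, Matrix.zero_mul]

theorem IsIsotropic.symplectic_mul {X : Matrix (l ⊕ l) m R} (hX : IsIsotropic X)
    {M : Matrix (l ⊕ l) (l ⊕ l) R} (hM : M ∈ symplecticGroup l R) : IsIsotropic (M * X) := by
  unfold IsIsotropic at hX ⊢
  calc (M * X)ᵀ * J l R * (M * X) = Xᵀ * (Mᵀ * J l R * M) * X := by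
        simp only [transpose_mul, Matrix.mul_assoc]
    _ = 0 := by rw [SymplecticGroup.mem_iff'.1 hM, hX]

theorem isIsotropic_fromRows_iff {P Q : Matrix l m R} :
    IsIsotropic (fromRows P Q) ↔ Qᵀ * P = Pᵀ * Q := by
  have pairing : (fromRows P Q)ᵀ * J l R * fromRows P Q = Qᵀ * P - Pᵀ * Q := by
    rw [Matrix.mul_assoc, J, fromBlocks_mul_fromRows, transpose_fromRows, fromCols_mul_fromRows]
    simp only [Matrix.zero_mul, Matrix.one_mul, Matrix.neg_mul, Matrix.mul_neg, zero_add, add_zero]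
    abel
  rw [IsIsotropic, pairing, sub_eq_zero]

theorem isIsotropic_fromRows_one_iff {N : Matrix l l R} :
    IsIsotropic (fromRows 1 N) ↔ N.IsSymm := by
  rw [isIsotropic_fromRows_iff, Matrix.mul_one, transpose_one, Matrix.one_mul, IsSymm]

end Isotropic

theorem mem_symplecticGroup_iff_transpose_mul_fromBlocks_mul {l R : Type*} [DecidableEq l]
    [Fintype l] [CommRing R] {M : Matrix (l ⊕ l) (l ⊕ l) R} :
    M ∈ symplecticGroup l R ↔
      Mᵀ * fromBlocks 0 1 (-1) 0 * M = fromBlocks 0 1 (-1) 0 := by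
  have neg_J : fromBlocks 0 1 (-1) 0 = -J l R := by
    simp only [J, fromBlocks_neg, neg_zero, neg_neg]
  rw [neg_J, Matrix.mul_neg, Matrix.neg_mul, neg_inj, SymplecticGroup.mem_iff']

theorem symplectic_fractional_linear_preserves_symmetric_general {l R : Type*} [DecidableEq l]
    [Fintype l] [CommRing R] {A B C D N : Matrix l l R}
    (hΛ : fromBlocks A B C D ∈ symplecticGroup l R) (hN : N.IsSymm)
    (hinv : IsUnit (A + B * N)) : ((C + D * N) * (A + B * N)⁻¹).IsSymm := by
  have image_graph : fromBlocks A B C D * fromRows (1 : Matrix l l R) N =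
      fromRows (A + B * N) (C + D * N) := by
    rw [fromBlocks_mul_fromRows, Matrix.mul_one, Matrix.mul_one]
  have normalize : fromRows (A + B * N) (C + D * N) * (A + B * N)⁻¹ =
      fromRows 1 ((C + D * N) * (A + B * N)⁻¹) := by
    rw [fromRows_mul, mul_nonsing_inv _ ((isUnit_iff_isUnit_det _).1 hinv)]
  rw [← isIsotropic_fromRows_one_iff, ← normalize, ← image_graph]
  exact ((isIsotropic_fromRows_one_iff.2 hN).symplectic_mul hΛ).mul_right _

/-- If `Λ = [[A,B],[C,D]]` is a real symplectic matrix
(`Λᵀ Ω Λ = Ω` with `Ω = [[0,1],[-1,0]]`), then for every complex symmetric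
matrix `N` with `A + B·N` invertible, `(C + D·N)·(A + B·N)⁻¹` is symmetric. -/
theorem symplectic_fractional_linear_preserves_symmetric {n : ℕ}
    (A B C D : Matrix (Fin n) (Fin n) ℝ)
    (hΛ : (fromBlocks A B C D)ᵀ *
        (fromBlocks (0 : Matrix (Fin n) (Fin n) ℝ) (1 : Matrix (Fin n) (Fin n) ℝ)
          (-1 : Matrix (Fin n) (Fin n) ℝ) (0 : Matrix (Fin n) (Fin n) ℝ)) *
        fromBlocks A B C D =
      fromBlocks (0 : Matrix (Fin n) (Fin n) ℝ) (1 : Matrix (Fin n) (Fin n) ℝ)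
        (-1 : Matrix (Fin n) (Fin n) ℝ) (0 : Matrix (Fin n) (Fin n) ℝ))
    (N : Matrix (Fin n) (Fin n) ℂ) (hN : Nᵀ = N)
    (hinv : IsUnit (A.map Complex.ofReal + B.map Complex.ofReal * N)) :
    ((C.map Complex.ofReal + D.map Complex.ofReal * N) *
        (A.map Complex.ofReal + B.map Complex.ofReal * N)⁻¹)ᵀ =
      (C.map Complex.ofReal + D.map Complex.ofReal * N) *
        (A.map Complex.ofReal + B.map Complex.ofReal * N)⁻¹ := by
  have hΛ_complex := SymplecticGroup.map_mem
    (mem_symplecticGroup_iff_transpose_mul_fromBlocks_mul.2 hΛ) Complex.ofRealHom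
  rw [fromBlocks_map] at hΛ_complex
  exact symplectic_fractional_linear_preserves_symmetric_general hΛ_complex hN hinv
end

section
/- Let Λ be a real 2n×2n matrix, written in n×n blocks as Λ = [[A,B],[C,D]], which is pseudo-orthogonal in the sense that Λᵀ H′ Λ = H′ where H′ = [[0, 1ₙ],[1ₙ, 0]]. Then for every real n×n matrix N such that both A + B·N and A − B·Nᵀ are invertible, one has (C − D·Nᵀ)·(A − B·Nᵀ)⁻¹ = −[(C + D·N)·(A + B·N)⁻¹]ᵀ; that is, taking the negative of the transpose of N before or after the fractional linear transformation induced by Λ gives the same result. -/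
open Matrix

/-! For the form `H′`, the graph of `-Nᵀ` is the orthogonal complement of the graph of `N`, and
an isometry `Λ` preserves orthogonality. Hence the images `Λ [1; N] = [P; Y]` and
`Λ [1; -Nᵀ] = [Q; X]` are orthogonal, that is `Pᵀ X + Yᵀ Q = 0`. When `P` is invertible this reads
`X = -(Y P⁻¹)ᵀ Q`. Pairing `Λ [1; -Nᵀ]` with `Λ [0; 1]` instead gives `Bᵀ X + Dᵀ Q = 1`, so `Q` has
a left inverse and `X Q⁻¹ = -(Y P⁻¹)ᵀ`.
-/

open LieAlgebra.Orthogonal (JD)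

section

variable {k l m R : Type*} [Fintype l] [DecidableEq l] [CommRing R]

theorem transpose_fromRows_mul_JD_mul_fromRows (P Y : Matrix l m R) (Q X : Matrix l k R) :
    (fromRows P Y)ᵀ * JD l R * fromRows Q X = Pᵀ * X + Yᵀ * Q := by
  rw [Matrix.mul_assoc, JD, fromBlocks_mul_fromRows, transpose_fromRows, fromCols_mul_fromRows]
  simp only [Matrix.zero_mul, Matrix.one_mul, zero_add, add_zero]

theorem pairing_eq_of_preserves_JD {A B C D : Matrix l l R}
    (hΛ : (fromBlocks A B C D)ᵀ * JD l R * fromBlocks A B C D = JD l R)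
    (U V : Matrix l m R) (U' V' : Matrix l k R) :
    (A * U + B * V)ᵀ * (C * U' + D * V') + (C * U + D * V)ᵀ * (A * U' + B * V') =
      Uᵀ * V' + Vᵀ * U' := by
  simp only [← transpose_fromRows_mul_JD_mul_fromRows, ← fromBlocks_mul_fromRows]
  calc (fromBlocks A B C D * fromRows U V)ᵀ * JD l R * (fromBlocks A B C D * fromRows U' V')
      = (fromRows U V)ᵀ * ((fromBlocks A B C D)ᵀ * JD l R * fromBlocks A B C D) *
          fromRows U' V' := by simp only [transpose_mul, Matrix.mul_assoc]
    _ = (fromRows U V)ᵀ * JD l R * fromRows U' V' := by rw [hΛ]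

theorem eq_neg_transpose_mul_inv_mul_of_pairing_eq_zero [Fintype k] {P : Matrix l l R}
    {Y : Matrix k l R} {Q : Matrix k m R} {X : Matrix l m R} (hP : IsUnit P)
    (h : Pᵀ * X + Yᵀ * Q = 0) : X = -(Y * P⁻¹)ᵀ * Q := by
  have hPT : IsUnit Pᵀ.det := by rwa [det_transpose, ← isUnit_iff_isUnit_det]
  calc X = Pᵀ⁻¹ * (Pᵀ * X) := (nonsing_inv_mul_cancel_left _ _ hPT).symm
    _ = Pᵀ⁻¹ * -(Yᵀ * Q) := by rw [eq_neg_of_add_eq_zero_left h]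
    _ = -(Y * P⁻¹)ᵀ * Q := by
      rw [transpose_mul, transpose_nonsing_inv, Matrix.mul_neg, Matrix.neg_mul, Matrix.mul_assoc]

theorem pseudo_orthogonal_fractional_linear_neg_transpose_general {A B C D : Matrix l l R}
    (hΛ : (fromBlocks A B C D)ᵀ * JD l R * fromBlocks A B C D = JD l R)
    {N : Matrix l l R} (hP : IsUnit (A + B * N)) :
    IsUnit (A - B * Nᵀ) ∧
      (C - D * Nᵀ) * (A - B * Nᵀ)⁻¹ = -((C + D * N) * (A + B * N)⁻¹)ᵀ := by
  have graphs_orthogonal :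
      (A + B * N)ᵀ * (C - D * Nᵀ) + (C + D * N)ᵀ * (A - B * Nᵀ) = 0 := by
    simpa [← sub_eq_add_neg] using pairing_eq_of_preserves_JD hΛ (1 : Matrix l l R) N 1 (-Nᵀ)
  have pairing_with_vertical : Bᵀ * (C - D * Nᵀ) + Dᵀ * (A - B * Nᵀ) = 1 := by
    simpa [← sub_eq_add_neg] using pairing_eq_of_preserves_JD hΛ (0 : Matrix l l R) 1 1 (-Nᵀ)
  have numerator_eq := eq_neg_transpose_mul_inv_mul_of_pairing_eq_zero hP graphs_orthogonal
  have hQ : IsUnit (A - B * Nᵀ) := by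
    rw [numerator_eq, ← Matrix.mul_assoc, ← Matrix.add_mul] at pairing_with_vertical
    exact .of_mul_eq_one_right _ pairing_with_vertical
  refine ⟨hQ, ?_⟩
  rw [numerator_eq, mul_nonsing_inv_cancel_right _ _ ((isUnit_iff_isUnit_det _).1 hQ)]

end

/-- If `Λ = [[A,B],[C,D]]` is a real pseudo-orthogonal matrix
(`Λᵀ H′ Λ = H′` with `H′ = [[0,1],[1,0]]`), then for every real matrix `N` with
`A + B·N` and `A − B·Nᵀ` invertible, the fractional linear transformation
commutes with `N ↦ −Nᵀ`:
`(C − D·Nᵀ)·(A − B·Nᵀ)⁻¹ = −[(C + D·N)·(A + B·N)⁻¹]ᵀ`. -/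
theorem pseudo_orthogonal_fractional_linear_neg_transpose {n : ℕ}
    (A B C D : Matrix (Fin n) (Fin n) ℝ)
    (hΛ : (fromBlocks A B C D)ᵀ *
        (fromBlocks (0 : Matrix (Fin n) (Fin n) ℝ) (1 : Matrix (Fin n) (Fin n) ℝ)
          (1 : Matrix (Fin n) (Fin n) ℝ) (0 : Matrix (Fin n) (Fin n) ℝ)) *
        fromBlocks A B C D =
      fromBlocks (0 : Matrix (Fin n) (Fin n) ℝ) (1 : Matrix (Fin n) (Fin n) ℝ)
        (1 : Matrix (Fin n) (Fin n) ℝ) (0 : Matrix (Fin n) (Fin n) ℝ))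
    (N : Matrix (Fin n) (Fin n) ℝ)
    (hinv : IsUnit (A + B * N)) (hinv' : IsUnit (A - B * Nᵀ)) :
    (C - D * Nᵀ) * (A - B * Nᵀ)⁻¹ = -((C + D * N) * (A + B * N)⁻¹)ᵀ :=
  (pseudo_orthogonal_fractional_linear_neg_transpose_general hΛ hinv).2
end

section
/- Let U₀, U₁ be complex n×n matrices satisfying U₀† Ū₁ = U₁† Ū₀ (where Ū denotes entrywise conjugation and U† the conjugate transpose), and suppose U₀† + U₁† is invertible. Then the Gaillard–Zumino matrix 𝒩 := i·(U₀† + U₁†)⁻¹·(U₀† − U₁†) is symmetric: 𝒩ᵀ = 𝒩. -/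
open Matrix

/-!
Write `A = U₀ᴴ` and `B = U₁ᴴ`, so that `Ū₀ = Aᵀ`, `Ū₁ = Bᵀ` and the hypothesis says that `A * Bᵀ` is
symmetric. Then the cross terms of `(A + B) * (A - B)ᵀ` cancel, leaving the symmetric matrix
`A * Aᵀ - B * Bᵀ`, and `((A + B)⁻¹ * (A - B))ᵀ` is congruent to it via `(A + B)⁻¹`.
-/

section

variable {m n R : Type*} [Fintype n]

theorem isSymm_mul_mul_transpose [NonUnitalCommSemiring R] {S : Matrix n n R}
    (hS : S.IsSymm) (M : Matrix m n R) : (M * S * Mᵀ).IsSymm := by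
  rw [IsSymm, transpose_mul, transpose_mul, transpose_transpose, hS.eq, Matrix.mul_assoc]

theorem isSymm_inv_mul_of_isSymm_mul_transpose [DecidableEq n] [CommRing R]
    {A B : Matrix n n R} (hA : IsUnit A) (hAB : (A * Bᵀ).IsSymm) : (A⁻¹ * B).IsSymm := by
  have hdet : IsUnit A.det := (isUnit_iff_isUnit_det A).mp hA
  have hcongr : A⁻¹ * (A * Bᵀ) * A⁻¹ᵀ = (A⁻¹ * B)ᵀ := by
    rw [nonsing_inv_mul_cancel_left _ _ hdet, transpose_mul]
  rw [← isSymm_transpose_iff, ← hcongr]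
  exact isSymm_mul_mul_transpose hAB A⁻¹

theorem add_mul_transpose_sub_of_isSymm [NonUnitalCommRing R] {A B : Matrix m n R}
    (hAB : (A * Bᵀ).IsSymm) :
    (A + B) * (A - B)ᵀ = A * Aᵀ - B * Bᵀ := by
  have hcross : B * Aᵀ = A * Bᵀ := by
    rw [← hAB.eq, transpose_mul, transpose_transpose]
  rw [transpose_sub, Matrix.add_mul, Matrix.mul_sub, Matrix.mul_sub, hcross]
  abel

theorem isSymm_inv_add_mul_sub [DecidableEq n] [CommRing R] {A B : Matrix n n R}
    (hAB : (A * Bᵀ).IsSymm) (hinv : IsUnit (A + B)) : ((A + B)⁻¹ * (A - B)).IsSymm := by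
  apply isSymm_inv_mul_of_isSymm_mul_transpose hinv
  rw [add_mul_transpose_sub_of_isSymm hAB]
  exact (isSymm_mul_transpose_self A).sub (isSymm_mul_transpose_self B)

theorem gaillard_zumino_matrix_symmetric_general [DecidableEq n] [CommRing R] [Star R]
    (c : R) (U₀ U₁ : Matrix n n R)
    (hsym : U₀ᴴ * U₁.map star = U₁ᴴ * U₀.map star)
    (hinv : IsUnit (U₀ᴴ + U₁ᴴ)) :
    (c • ((U₀ᴴ + U₁ᴴ)⁻¹ * (U₀ᴴ - U₁ᴴ)))ᵀ =
      c • ((U₀ᴴ + U₁ᴴ)⁻¹ * (U₀ᴴ - U₁ᴴ)) := by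
  have hmap (U : Matrix n n R) : U.map star = Uᴴᵀ := rfl
  have hcross : (U₀ᴴ * U₁ᴴᵀ).IsSymm := by
    rw [IsSymm, transpose_mul, transpose_transpose, ← hmap, ← hmap, hsym]
  exact (isSymm_inv_add_mul_sub hcross hinv).smul c

end

/-- If `U₀ᴴ Ū₁ = U₁ᴴ Ū₀` and `U₀ᴴ + U₁ᴴ` is invertible, then the
Gaillard–Zumino matrix `𝒩 = i·(U₀ᴴ + U₁ᴴ)⁻¹·(U₀ᴴ − U₁ᴴ)` is symmetric. -/
theorem gaillard_zumino_matrix_symmetric {n : ℕ}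
    (U₀ U₁ : Matrix (Fin n) (Fin n) ℂ)
    (hsym : U₀ᴴ * U₁.map star = U₁ᴴ * U₀.map star)
    (hinv : IsUnit (U₀ᴴ + U₁ᴴ)) :
    (Complex.I • ((U₀ᴴ + U₁ᴴ)⁻¹ * (U₀ᴴ - U₁ᴴ)))ᵀ =
      Complex.I • ((U₀ᴴ + U₁ᴴ)⁻¹ * (U₀ᴴ - U₁ᴴ)) :=
  gaillard_zumino_matrix_symmetric_general Complex.I U₀ U₁ hsym hinv
end

section
/- Let 𝒞 = (1/√2)·[[1ₙ, i·1ₙ],[1ₙ, −i·1ₙ]] be the Cayley matrix. Let S = [[T, V̄],[V, T̄]] be a complex 2n×2n matrix in conjugate-block form; then Λ := 𝒞⁻¹ S 𝒞 has real entries, and we write Λ = [[A,B],[C,D]] in n×n blocks. Suppose O = [[U₀, Ū₁],[U₁, Ū₀]] and O′ = [[U₀′, Ū₁′],[U₁′, Ū₀′]] are complex 2n×2n matrices in conjugate-block form with U₀† Ū₁ = U₁† Ū₀ and U₀′† Ū₁′ = U₁′† Ū₀′, and that S·O = O′·[[W, 0],[0, W̄]] for some invertible complex n×n matrix W. If U₀†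 + U₁†, U₀′† + U₁′† and A + B·𝒩 are invertible, where 𝒩 := i·(U₀† + U₁†)⁻¹·(U₀† − U₁†) and 𝒩′ := i·(U₀′† + U₁′†)⁻¹·(U₀′† − U₁′†), then 𝒩′ = (C + D·𝒩)·(A + B·𝒩)⁻¹. -/
open Matrix

/-- The Cayley matrix `𝒞 = (1/√2)·[[1, i·1],[1, −i·1]]`. -/
noncomputable def cayley (n : ℕ) : Matrix (Fin n ⊕ Fin n) (Fin n ⊕ Fin n) ℂ :=
  ((Real.sqrt 2 : ℂ))⁻¹ •
    fromBlocks (1 : Matrix (Fin n) (Fin n) ℂ) (Complex.I • (1 : Matrix (Fin n) (Fin n) ℂ))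
      (1 : Matrix (Fin n) (Fin n) ℂ) (-(Complex.I • (1 : Matrix (Fin n) (Fin n) ℂ)))

/-!
The period matrix is characterised by `𝒩 X = Y`, where `X = Ū₀ + Ū₁` and `Y = i (Ū₀ - Ū₁)`: after
clearing the inverse, this is exactly the symmetry condition on `U₀, U₁`. Up to the factor `√2`, the
column `(X; Y)` is `𝒞⁻¹` applied to the second block column `(Ū₁; Ū₀)` of `O`. Hence the second
block column of `S O = O' diag(W, W̄)` says that `Λ = 𝒞⁻¹ S 𝒞` maps the graph of `𝒩` into the graph
of `𝒩'`, and this is the fractional linear transformation law.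

For the reality of `Λ`, complex conjugation acts on `𝒞` as the exchange of its two block rows, and
on a matrix in conjugate-block form as the simultaneous exchange of block rows and block columns.
-/

theorem mul_add_mul_eq_of_fromBlocks_mul_fromRows {R k l m n p : Type*} [Semiring R]
    [Fintype k] [Fintype m] [DecidableEq m] [Fintype n] [Fintype p]
    {A : Matrix p m R} {B : Matrix p n R} {C : Matrix l m R} {D : Matrix l n R}
    {N : Matrix n m R} {N' : Matrix l p R}
    {X : Matrix m m R} {X' : Matrix p k R} {w : Matrix k m R}
    (hX : IsUnit X)
    (h : fromBlocks A B C D * fromRows X (N * X) = fromRows X' (N' * X') * w) :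
    N' * (A + B * N) = C + D * N := by
  rw [fromBlocks_mul_fromRows, fromRows_mul, fromRows_ext_iff] at h
  obtain ⟨top, bottom⟩ := h
  obtain ⟨Y, hXY⟩ := hX.exists_right_inv
  have hmul : N' * (A + B * N) * X = (C + D * N) * X := by
    calc N' * (A + B * N) * X = N' * (A * X + B * (N * X)) := by
          rw [Matrix.mul_assoc, Matrix.add_mul, Matrix.mul_assoc B]
      _ = N' * X' * w := by rw [top, Matrix.mul_assoc]
      _ = (C + D * N) * X := by rw [← bottom, Matrix.add_mul, Matrix.mul_assoc D]
  simpa [Matrix.mul_assoc, hXY] using congrArg (· * Y) hmul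

section PeriodMatrix

variable {m : Type*} [Fintype m] [DecidableEq m]

/-- The Gaillard–Zumino master formula for the kinetic period matrix `𝒩` of the coset representative
`[[U₀, Ū₁], [U₁, Ū₀]]`. The inverse is the junk-valued matrix inverse, so the formula is meaningful
only when `U₀ᴴ + U₁ᴴ` is invertible. -/
noncomputable def periodMatrix (U₀ U₁ : Matrix m m ℂ) : Matrix m m ℂ :=
  Complex.I • ((U₀ᴴ + U₁ᴴ)⁻¹ * (U₀ᴴ - U₁ᴴ))

variable {U₀ U₁ : Matrix m m ℂ}

theorem periodMatrix_mul (hU : U₀ᴴ * U₁.map star = U₁ᴴ * U₀.map star)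
    (hP : IsUnit (U₀ᴴ + U₁ᴴ)) :
    periodMatrix U₀ U₁ * (U₀.map star + U₁.map star) =
      Complex.I • (U₀.map star - U₁.map star) := by
  have hcross : (U₀ᴴ - U₁ᴴ) * (U₀.map star + U₁.map star) =
      (U₀ᴴ + U₁ᴴ) * (U₀.map star - U₁.map star) := by
    simp only [sub_mul, add_mul, mul_add, mul_sub, hU]
    abel
  rw [periodMatrix, Matrix.smul_mul, Matrix.mul_assoc, hcross,
    nonsing_inv_mul_cancel_left _ _ ((isUnit_iff_isUnit_det _).1 hP)]

theorem isUnit_map_star_add_map_star_iff :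
    IsUnit (U₀.map star + U₁.map star) ↔ IsUnit (U₀ᴴ + U₁ᴴ) :=
  isUnit_transpose (U₀.map star + U₁.map star) |>.symm

end PeriodMatrix

theorem map_star_mul {l m n R : Type*} [CommSemiring R] [StarRing R] [Fintype m]
    (M : Matrix l m R) (N : Matrix m n R) :
    (M * N).map star = M.map star * N.map star :=
  Matrix.map_mul (f := starRingEnd R)

theorem map_star_nonsing_inv {n R : Type*} [CommRing R] [StarRing R] [Fintype n] [DecidableEq n]
    (M : Matrix n n R) : M⁻¹.map star = (M.map star)⁻¹ :=
  calc M⁻¹.map star = (M⁻¹)ᵀᴴ := rfl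
    _ = (Mᵀᴴ)⁻¹ := by rw [transpose_nonsing_inv, conjTranspose_nonsing_inv]

theorem fromBlocks_map_star_eq_submatrix_swap {m n R : Type*} [InvolutiveStar R]
    (T V : Matrix m n R) :
    (fromBlocks T (V.map star) V (T.map star)).map star =
      (fromBlocks T (V.map star) V (T.map star)).submatrix Sum.swap Sum.swap := by
  simp [fromBlocks_map, Function.comp_def]

section Cayley

variable {n : ℕ} {k m : Type*}

theorem ofReal_sqrt_two_mul_self : (√2 : ℂ) * √2 = 2 := by
  rw [← Complex.ofReal_mul, Real.mul_self_sqrt zero_le_two, Complex.ofReal_ofNat]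

theorem cayley_mem_unitaryGroup (n : ℕ) : cayley n ∈ unitaryGroup (Fin n ⊕ Fin n) ℂ := by
  have hsqrt : (√2 : ℂ)⁻¹ * (√2 : ℂ)⁻¹ = 2⁻¹ := by
    rw [← mul_inv, ofReal_sqrt_two_mul_self]
  rw [mem_unitaryGroup_iff, star_eq_conjTranspose, cayley, conjTranspose_smul,
    fromBlocks_conjTranspose, Matrix.smul_mul, Matrix.mul_smul, smul_smul, fromBlocks_multiply,
    ← fromBlocks_one]
  simp [hsqrt, smul_smul, fromBlocks_smul, ← two_smul ℂ (1 : Matrix (Fin n) (Fin n) ℂ)]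

theorem isUnit_det_cayley (n : ℕ) : IsUnit (cayley n).det :=
  isUnit_det_of_right_inverse (mem_unitaryGroup_iff.1 (cayley_mem_unitaryGroup n))

theorem cayley_mul_fromRows (P Q : Matrix (Fin n) m ℂ) :
    cayley n * fromRows (Q + P) (Complex.I • (Q - P)) = (√2 : ℂ) • fromRows P Q := by
  have hsqrt : (√2 : ℂ)⁻¹ * 2 = √2 := by
    rw [inv_mul_eq_iff_eq_mul₀ (by simp), ofReal_sqrt_two_mul_self]
  have htop : Q + P + Complex.I • Complex.I • (Q - P) = (2 : ℂ) • P := by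
    rw [smul_smul, Complex.I_mul_I]
    module
  have hbottom : Q + P - Complex.I • Complex.I • (Q - P) = (2 : ℂ) • Q := by
    rw [smul_smul, Complex.I_mul_I]
    module
  have hsmul : fromRows ((2 : ℂ) • P) ((2 : ℂ) • Q) = (2 : ℂ) • fromRows P Q := by
    ext (i | i) j <;> rfl
  rw [cayley, Matrix.smul_mul, fromBlocks_mul_fromRows]
  simp only [Matrix.one_mul, Matrix.smul_mul, Matrix.neg_mul, ← sub_eq_add_neg]
  rw [htop, hbottom, hsmul, smul_smul, hsqrt]

theorem inv_cayley_mul_mul_cayley_mul_fromRows [Fintype k]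
    {S : Matrix (Fin n ⊕ Fin n) (Fin n ⊕ Fin n) ℂ}
    {P Q : Matrix (Fin n) m ℂ} {P' Q' : Matrix (Fin n) k ℂ} {w : Matrix k m ℂ}
    (h : S * fromRows P Q = fromRows P' Q' * w) :
    (cayley n)⁻¹ * S * cayley n * fromRows (Q + P) (Complex.I • (Q - P)) =
      fromRows (Q' + P') (Complex.I • (Q' - P')) * w := by
  rw [Matrix.mul_assoc, cayley_mul_fromRows, Matrix.mul_smul, Matrix.mul_assoc, h,
    ← Matrix.mul_smul, ← Matrix.smul_mul, ← cayley_mul_fromRows, Matrix.mul_assoc,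
    nonsing_inv_mul_cancel_left _ _ (isUnit_det_cayley n)]

theorem cayley_map_star (n : ℕ) :
    (cayley n).map star = (cayley n).submatrix Sum.swap id := by
  ext (i | i) (j | j) <;> obtain rfl | hij := eq_or_ne i j <;> simp [cayley, *]

theorem inv_cayley_mul_mul_cayley_map_star {S : Matrix (Fin n ⊕ Fin n) (Fin n ⊕ Fin n) ℂ}
    (hS : S.map star = S.submatrix Sum.swap Sum.swap) :
    ((cayley n)⁻¹ * S * cayley n).map star = (cayley n)⁻¹ * S * cayley n := by
  let swap := Equiv.sumComm (Fin n) (Fin n)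
  have hinv : ((cayley n).submatrix swap id)⁻¹ = (cayley n)⁻¹.submatrix id swap :=
    inv_submatrix_equiv (cayley n) swap (Equiv.refl _)
  calc ((cayley n)⁻¹ * S * cayley n).map star
      = ((cayley n).submatrix swap id)⁻¹ * S.submatrix swap swap *
          (cayley n).submatrix swap id := by
        rw [map_star_mul, map_star_mul, map_star_nonsing_inv, hS, cayley_map_star]
        rfl
    _ = (cayley n)⁻¹ * S * cayley n := by
        rw [hinv, submatrix_mul_equiv, submatrix_mul_equiv, submatrix_id_id]

end Cayley

theorem periodMatrix_eq_fractionalLinear {n : ℕ}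
    {U₀ U₁ U₀' U₁' w A B C D : Matrix (Fin n) (Fin n) ℂ}
    {S : Matrix (Fin n ⊕ Fin n) (Fin n ⊕ Fin n) ℂ}
    (hU : U₀ᴴ * U₁.map star = U₁ᴴ * U₀.map star)
    (hU' : U₀'ᴴ * U₁'.map star = U₁'ᴴ * U₀'.map star)
    (hS : S * fromRows (U₁.map star) (U₀.map star) =
      fromRows (U₁'.map star) (U₀'.map star) * w)
    (hP : IsUnit (U₀ᴴ + U₁ᴴ))
    (hP' : IsUnit (U₀'ᴴ + U₁'ᴴ))
    (hblocks : (cayley n)⁻¹ * S * cayley n = fromBlocks A B C D)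
    (hAB : IsUnit (A + B * periodMatrix U₀ U₁)) :
    periodMatrix U₀' U₁' =
      (C + D * periodMatrix U₀ U₁) * (A + B * periodMatrix U₀ U₁)⁻¹ := by
  have hgraph : fromBlocks A B C D * fromRows (U₀.map star + U₁.map star)
        (periodMatrix U₀ U₁ * (U₀.map star + U₁.map star)) =
      fromRows (U₀'.map star + U₁'.map star)
        (periodMatrix U₀' U₁' * (U₀'.map star + U₁'.map star)) * w := by
    rw [periodMatrix_mul hU hP, periodMatrix_mul hU' hP', ← hblocks]
    exact inv_cayley_mul_mul_cayley_mul_fromRows hS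
  rw [← mul_add_mul_eq_of_fromBlocks_mul_fromRows (isUnit_map_star_add_map_star_iff.2 hP) hgraph,
    mul_nonsing_inv_cancel_right _ _ ((isUnit_iff_isUnit_det _).1 hAB)]

/-- Let `S = [[T,V̄],[V,T̄]]` be in conjugate-block form and let
`Λ = 𝒞⁻¹ S 𝒞 = [[A,B],[C,D]]`.  If `O = [[U₀,Ū₁],[U₁,Ū₀]]`, `O′ = [[U₀′,Ū₁′],[U₁′,Ū₀′]]`
satisfy the Gaillard–Zumino symmetry conditions, `S·O = O′·[[W,0],[0,W̄]]` with `W`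
invertible, and `U₀ᴴ+U₁ᴴ`, `U₀′ᴴ+U₁′ᴴ`, `A + B·𝒩` are invertible, then `Λ` is real
and `𝒩′ = (C + D·𝒩)·(A + B·𝒩)⁻¹`, where `𝒩`, `𝒩′` are the master-formula matrices. -/
theorem gaillard_zumino_master_formula_covariance {n : ℕ}
    (T V U₀ U₁ U₀' U₁' W : Matrix (Fin n) (Fin n) ℂ)
    (S O O' : Matrix (Fin n ⊕ Fin n) (Fin n ⊕ Fin n) ℂ)
    (A B C D N N' : Matrix (Fin n) (Fin n) ℂ)
    (hS : S = fromBlocks T (V.map star) V (T.map star))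
    (hO : O = fromBlocks U₀ (U₁.map star) U₁ (U₀.map star))
    (hO' : O' = fromBlocks U₀' (U₁'.map star) U₁' (U₀'.map star))
    (hU : U₀ᴴ * U₁.map star = U₁ᴴ * U₀.map star)
    (hU' : U₀'ᴴ * U₁'.map star = U₁'ᴴ * U₀'.map star)
    (hW : IsUnit W)
    (hact : S * O = O' * fromBlocks W 0 0 (W.map star))
    (hP : IsUnit (U₀ᴴ + U₁ᴴ))
    (hP' : IsUnit (U₀'ᴴ + U₁'ᴴ))
    (hN : N = Complex.I • ((U₀ᴴ + U₁ᴴ)⁻¹ * (U₀ᴴ - U₁ᴴ)))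
    (hN' : N' = Complex.I • ((U₀'ᴴ + U₁'ᴴ)⁻¹ * (U₀'ᴴ - U₁'ᴴ)))
    (hblocks : (cayley n)⁻¹ * S * cayley n = fromBlocks A B C D)
    (hAB : IsUnit (A + B * N)) :
    (∀ p q, (((cayley n)⁻¹ * S * cayley n) p q).im = 0) ∧
      N' = (C + D * N) * (A + B * N)⁻¹ := by
  subst hS hO hO' hN hN'
  have hcol : fromBlocks T (V.map star) V (T.map star) * fromRows (U₁.map star) (U₀.map star) =
      fromRows (U₁'.map star) (U₀'.map star) * W.map star := by
    simp only [← fromCols_fromRows_eq_fromBlocks U₀, ← fromCols_fromRows_eq_fromBlocks U₀',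
      mul_fromCols, fromCols_mul_fromBlocks, fromCols_ext_iff] at hact
    simpa using hact.2
  have hreal := inv_cayley_mul_mul_cayley_map_star (fromBlocks_map_star_eq_submatrix_swap T V)
  exact ⟨fun p q ↦ Complex.conj_eq_iff_im.1 (congrFun₂ hreal p q),
    periodMatrix_eq_fractionalLinear hU hU' hcol hP hP' hblocks hAB⟩
end

section
/- Let η = diag(1, 1, −1, …, −1) be the (2+n)×(2+n) metric of signature (2,n) and let L be a real (2+n)×(2+n) matrix with Lᵀ η L = η. Denote by L₀ and L₁ the first two columns of L and set Φ := (L₀ + i·L₁)/√2 ∈ ℂ^{2+n}. Then: (i) Φ̄ᵀ η Φ = 1; (ii) Φᵀ η Φ = 0; (iii) Φ Φ̄ᵀ + Φ̄ Φᵀ = (1/2)·(L Lᵀ + η). -/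
open Matrix

/-!
Read the columns of `L` as a pseudo-orthonormal frame, `Lᵀ G L = η`, for a metric `G`; the classical
case is `G = η`.  Contracting `G` with `Φ = (u + iv)/√2` and its conjugate only involves the Gram
matrix of `u` and `v`, which is the timelike block of `η`.  For the completeness relation, turn
`Lᵀ G L = η` around to `L η Lᵀ = G⁻¹` (a left inverse of a square matrix is a right inverse, and
`η⁻¹ = η`).  Since `1 + η` is twice the projection onto the timelike block,
`L Lᵀ + G⁻¹ = L (1 + η) Lᵀ` only sees the timelike columns `u`, `v`, and
`u uᵀ + v vᵀ = Φ Φ̄ᵀ + Φ̄ Φᵀ`.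
-/

section Frame

variable {m k R : Type*} [Fintype m]

theorem col_dotProduct_mulVec_col [NonUnitalSemiring R] (G : Matrix m m R) (L : Matrix m k R)
    (a b : k) : L.col a ⬝ᵥ G *ᵥ L.col b = (Lᵀ * G * L) a b := by
  rw [Matrix.mul_assoc]
  rfl

theorem mul_inv_mul_transpose_eq_inv [CommRing R] [Fintype k] [DecidableEq m] [DecidableEq k]
    (hcard : Fintype.card k = Fintype.card m) {G : Matrix m m R} {D : Matrix k k R}
    {L : Matrix m k R} (hD : IsUnit D.det) (hL : Lᵀ * G * L = D) :
    L * D⁻¹ * Lᵀ = G⁻¹ := by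
  have left_inverse : D⁻¹ * Lᵀ * G * L = 1 := by
    simpa only [← Matrix.mul_assoc, nonsing_inv_mul D hD] using congrArg (D⁻¹ * ·) hL
  have right_inverse : L * (D⁻¹ * Lᵀ * G) = 1 :=
    (mul_eq_one_comm_of_card_eq k m R hcard).mp left_inverse
  refine (inv_eq_left_inv ?_).symm
  simpa only [Matrix.mul_assoc] using right_inverse

end Frame

theorem mul_transpose_eq_vecMulVec_add_vecMulVec {m R : Type*} [NonUnitalNonAssocSemiring R]
    (M : Matrix m (Fin 2) R) :
    M * Mᵀ = vecMulVec (M.col 0) (M.col 0) + vecMulVec (M.col 1) (M.col 1) := by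
  ext i j
  simp only [mul_apply, Fin.sum_univ_two, transpose_apply, Matrix.add_apply, vecMulVec_apply,
    col_apply]

section SignatureMetric

/-- The diagonal metric `η` equal to `1` on the timelike indices `p` and `-1` on the spacelike
indices `q`, in block form. -/
def signatureMetric (p q R : Type*) [DecidableEq p] [DecidableEq q] [Ring R] :
    Matrix (p ⊕ q) (p ⊕ q) R :=
  fromBlocks 1 0 0 (-1)

variable {m p q R : Type*} [Fintype p] [Fintype q] [DecidableEq p] [DecidableEq q]

theorem signatureMetric_mul_self [Ring R] : signatureMetric p q R * signatureMetric p q R = 1 := by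
  simp [signatureMetric, fromBlocks_multiply]

theorem inv_signatureMetric [CommRing R] : (signatureMetric p q R)⁻¹ = signatureMetric p q R :=
  inv_eq_left_inv signatureMetric_mul_self

theorem mul_transpose_add_mul_signatureMetric_mul_transpose [Ring R] (L : Matrix m (p ⊕ q) R) :
    L * Lᵀ + L * signatureMetric p q R * Lᵀ = 2 • (L.toCols₁ * L.toCols₁ᵀ) := by
  obtain ⟨A, B, rfl⟩ : ∃ A B, L = fromCols A B := ⟨_, _, (fromCols_toCols L).symm⟩
  simp only [signatureMetric, fromCols_mul_fromBlocks, transpose_fromCols, fromCols_mul_fromRows,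
    toCols₁_fromCols, Matrix.mul_one, Matrix.mul_zero, Matrix.mul_neg, Matrix.neg_mul, add_zero,
    zero_add]
  abel

theorem mul_transpose_add_inv_eq_two_nsmul [CommRing R] [Fintype m] [DecidableEq m]
    (hcard : Fintype.card (p ⊕ q) = Fintype.card m) {G : Matrix m m R} {L : Matrix m (p ⊕ q) R}
    (hL : Lᵀ * G * L = signatureMetric p q R) :
    L * Lᵀ + G⁻¹ = 2 • (L.toCols₁ * L.toCols₁ᵀ) := by
  have hη : IsUnit (signatureMetric p q R).det :=
    isUnit_det_of_left_inverse signatureMetric_mul_self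
  rw [← mul_inv_mul_transpose_eq_inv hcard hη hL, inv_signatureMetric,
    mul_transpose_add_mul_signatureMetric_mul_transpose]

end SignatureMetric

section CalabiVisentini

variable {m : Type*}

/-- The complex vector `(u + iv)/√2` built from two real vectors; for the two timelike columns of a
coset representative of `SO(2,n)/(SO(2)×SO(n))` it is the Calabi–Visentini section `Φ`. -/
noncomputable def calabiVisentiniSection (u v : m → ℝ) : m → ℂ :=
  fun i => ((u i : ℂ) + Complex.I * (v i : ℂ)) / (Real.sqrt 2 : ℂ)

theorem star_calabiVisentiniSection (u v : m → ℝ) :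
    star (calabiVisentiniSection u v) = calabiVisentiniSection u (-v) := by
  ext i
  simp [calabiVisentiniSection]

theorem calabiVisentiniSection_mul (u v u' v' : m → ℝ) (i j : m) :
    calabiVisentiniSection u v i * calabiVisentiniSection u' v' j =
      (((u i * u' j - v i * v' j : ℝ) : ℂ) +
        Complex.I * ((u i * v' j + v i * u' j : ℝ) : ℂ)) / 2 := by
  have sqrt_two_mul_self : (Real.sqrt 2 : ℂ) * (Real.sqrt 2 : ℂ) = 2 := by
    exact_mod_cast Real.mul_self_sqrt zero_le_two
  rw [calabiVisentiniSection, calabiVisentiniSection, div_mul_div_comm, sqrt_two_mul_self]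
  push_cast
  linear_combination (v i * v' j / 2 : ℂ) * Complex.I_sq

theorem calabiVisentiniSection_dotProduct_mulVec [Fintype m] (A : Matrix m m ℝ)
    (u v u' v' : m → ℝ) :
    calabiVisentiniSection u v ⬝ᵥ (A.map Complex.ofReal *ᵥ calabiVisentiniSection u' v') =
      (((u ⬝ᵥ A *ᵥ u' - v ⬝ᵥ A *ᵥ v' : ℝ) : ℂ) +
        Complex.I * ((u ⬝ᵥ A *ᵥ v' + v ⬝ᵥ A *ᵥ u' : ℝ) : ℂ)) / 2 := by
  simp only [dotProduct, mulVec, Finset.mul_sum, map_apply, mul_left_comm _ (Complex.ofReal _),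
    calabiVisentiniSection_mul, ← Finset.sum_add_distrib, ← Finset.sum_sub_distrib,
    Complex.ofReal_sum, Finset.sum_div]
  refine Finset.sum_congr rfl fun i _ => Finset.sum_congr rfl fun j _ => ?_
  push_cast
  ring

theorem vecMulVec_calabiVisentiniSection_star_add (u v : m → ℝ) :
    vecMulVec (calabiVisentiniSection u v) (star (calabiVisentiniSection u v)) +
        vecMulVec (star (calabiVisentiniSection u v)) (calabiVisentiniSection u v) =
      (vecMulVec u u + vecMulVec v v).map Complex.ofReal := by
  ext i j
  simp only [star_calabiVisentiniSection, Matrix.add_apply, vecMulVec_apply, map_apply,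
    calabiVisentiniSection_mul, Pi.neg_apply]
  push_cast
  ring

end CalabiVisentini

theorem calabi_visentini_section_identities_general
    {m q : Type*} [Fintype m] [Fintype q] [DecidableEq m] [DecidableEq q]
    (hcard : Fintype.card (Fin 2 ⊕ q) = Fintype.card m)
    {G : Matrix m m ℝ} {L : Matrix m (Fin 2 ⊕ q) ℝ}
    (hL : Lᵀ * G * L = signatureMetric (Fin 2) q ℝ)
    {Φ : m → ℂ} (hΦ : Φ = calabiVisentiniSection (L.col (Sum.inl 0)) (L.col (Sum.inl 1))) :
    star Φ ⬝ᵥ (G.map Complex.ofReal *ᵥ Φ) = 1 ∧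
    Φ ⬝ᵥ (G.map Complex.ofReal *ᵥ Φ) = 0 ∧
    vecMulVec Φ (star Φ) + vecMulVec (star Φ) Φ =
      ((1 : ℂ) / 2) • ((L * Lᵀ).map Complex.ofReal + G⁻¹.map Complex.ofReal) := by
  have gram (a b : Fin 2) :
      L.col (Sum.inl a) ⬝ᵥ G *ᵥ L.col (Sum.inl b) = (1 : Matrix (Fin 2) (Fin 2) ℝ) a b := by
    rw [col_dotProduct_mulVec_col, hL, signatureMetric, fromBlocks_apply₁₁]
  have timelike : L * Lᵀ + G⁻¹ = 2 • (vecMulVec (L.col (Sum.inl 0)) (L.col (Sum.inl 0)) +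
      vecMulVec (L.col (Sum.inl 1)) (L.col (Sum.inl 1))) := by
    rw [mul_transpose_add_inv_eq_two_nsmul hcard hL, mul_transpose_eq_vecMulVec_add_vecMulVec]
    rfl
  subst hΦ
  refine ⟨?_, ?_, ?_⟩
  · rw [star_calabiVisentiniSection, calabiVisentiniSection_dotProduct_mulVec]
    simp [neg_dotProduct, gram, one_add_one_eq_two]
  · rw [calabiVisentiniSection_dotProduct_mulVec]
    simp [gram]
  · rw [vecMulVec_calabiVisentiniSection_star_add, ← Matrix.map_add _ Complex.ofReal_add, timelike]
    ext i j
    simp only [map_apply, Matrix.smul_apply, two_nsmul, Matrix.add_apply, smul_eq_mul]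
    push_cast
    ring

/-- For `L ∈ SO(2,n)` (i.e. `LᵀηL = η` with `η = diag(1,1,−1,…,−1)`)
let `Φ = (L₀ + i·L₁)/√2` be built from the first two columns of `L`.  Then
(i) `Φ̄ᵀ η Φ = 1`; (ii) `Φᵀ η Φ = 0`; (iii) `Φ Φ̄ᵀ + Φ̄ Φᵀ = ½(L Lᵀ + η)`. -/
theorem calabi_visentini_section_identities {n : ℕ}
    (η L : Matrix (Fin 2 ⊕ Fin n) (Fin 2 ⊕ Fin n) ℝ)
    (hη : η = fromBlocks 1 0 0 (-1))
    (hL : Lᵀ * η * L = η)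
    (Φ : (Fin 2 ⊕ Fin n) → ℂ)
    (hΦ : Φ = fun i =>
      ((L i (Sum.inl 0) : ℂ) + Complex.I * (L i (Sum.inl 1) : ℂ)) / (Real.sqrt 2 : ℂ)) :
    (star Φ) ⬝ᵥ ((η.map Complex.ofReal).mulVec Φ) = 1 ∧
    Φ ⬝ᵥ ((η.map Complex.ofReal).mulVec Φ) = 0 ∧
    vecMulVec Φ (star Φ) + vecMulVec (star Φ) Φ =
      ((1 : ℂ) / 2) • ((L * Lᵀ).map Complex.ofReal + η.map Complex.ofReal) := by
  obtain rfl : η = signatureMetric (Fin 2) (Fin n) ℝ := hη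
  simpa only [inv_signatureMetric] using
    calabi_visentini_section_identities_general rfl hL hΦ
end

section
/- Define, for X, Y, u ∈ ℂ, the Seiberg–Witten quartic potential W(X, Y; u) := (1/4)·(X⁴ + Y⁴) + (u/2)·X²Y². Then: (i) for all X, Y, u: W(i·X, Y; u) = W(X, Y; −u); and (ii) for all X, Y and all u ≠ −1: W( (i·X + Y)/√2, (−i·X + Y)/√2 ; u ) = ((1 + u)/2) · W( X, Y ; (u − 3)/(u + 1) ). -/
/-- The Seiberg–Witten quartic potential `W(X,Y;u) = ¼(X⁴+Y⁴) + (u/2)X²Y²`. -/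
noncomputable def SWpotential (X Y u : ℂ) : ℂ :=
  (1 / 4) * (X ^ 4 + Y ^ 4) + (u / 2) * X ^ 2 * Y ^ 2

/-!
The second substitution is the first, `X ↦ iX`, followed by the rotation
`(X, Y) ↦ ((X + Y)/√2, (-X + Y)/√2)`. As a quadratic form in `(X², Y²)`, the potential is
diagonal in `X² ± Y²`, and the rotation sends `X² + Y²` and `X² - Y²` to `X² + Y²` and `2XY`.
Up to an overall factor it therefore acts on the modulus by `u ↦ (3 - u)/(u + 1)`, and composing
with `u ↦ -u` gives `u ↦ (u - 3)/(u + 1)`.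
-/

theorem SWpotential_I_mul (X Y u : ℂ) :
    SWpotential (Complex.I * X) Y u = SWpotential X Y (-u) := by
  simp only [SWpotential, mul_pow, Complex.I_sq, Complex.I_pow_four]
  ring

theorem SWpotential_div_div (X Y u c : ℂ) :
    SWpotential (X / c) (Y / c) u = SWpotential X Y u / c ^ 4 := by
  unfold SWpotential
  ring

theorem SWpotential_eq_sq_add_sq (X Y u : ℂ) :
    SWpotential X Y u =
      (1 + u) / 8 * (X ^ 2 + Y ^ 2) ^ 2 + (1 - u) / 8 * (X ^ 2 - Y ^ 2) ^ 2 := by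
  unfold SWpotential
  ring

theorem SWpotential_add_neg_add (X Y : ℂ) {u : ℂ} (hu : u ≠ -1) :
    SWpotential (X + Y) (-X + Y) u =
      2 * (1 + u) * SWpotential X Y ((3 - u) / (u + 1)) := by
  have hu' : u + 1 ≠ 0 := mt eq_neg_of_add_eq_zero_left hu
  have sum_sq : (X + Y) ^ 2 + (-X + Y) ^ 2 = 2 * (X ^ 2 + Y ^ 2) := by ring
  have sub_sq : (X + Y) ^ 2 - (-X + Y) ^ 2 = 4 * (X * Y) := by ring
  calc
    SWpotential (X + Y) (-X + Y) u
      = (1 + u) / 8 * (2 * (X ^ 2 + Y ^ 2)) ^ 2 + (1 - u) / 8 * (4 * (X * Y)) ^ 2 := by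
        rw [SWpotential_eq_sq_add_sq, sum_sq, sub_sq]
    _ = (1 + u) / 2 * (X ^ 4 + Y ^ 4) + (3 - u) * X ^ 2 * Y ^ 2 := by ring
    _ = 2 * (1 + u) * SWpotential X Y ((3 - u) / (u + 1)) := by
        unfold SWpotential
        field_simp
        ring

theorem ofReal_sqrt_two_pow_four : (Real.sqrt 2 : ℂ) ^ 4 = 4 := by
  have sqrt_two_pow_four : Real.sqrt 2 ^ 4 = 4 := by
    rw [pow_mul (Real.sqrt 2) 2 2, Real.sq_sqrt zero_le_two]
    norm_num
  exact_mod_cast sqrt_two_pow_four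

/-- The generators of the dihedral symmetry of the Seiberg–Witten
quartic potential: (i) `W(iX, Y; u) = W(X, Y; −u)`; (ii) for `u ≠ −1`,
`W((iX+Y)/√2, (−iX+Y)/√2; u) = ((1+u)/2)·W(X, Y; (u−3)/(u+1))`. -/
theorem seiberg_witten_potential_dihedral_symmetry :
    (∀ X Y u : ℂ, SWpotential (Complex.I * X) Y u = SWpotential X Y (-u)) ∧
    (∀ X Y u : ℂ, u ≠ -1 →
      SWpotential ((Complex.I * X + Y) / (Real.sqrt 2 : ℂ))
          ((-(Complex.I * X) + Y) / (Real.sqrt 2 : ℂ)) u =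
        ((1 + u) / 2) * SWpotential X Y ((u - 3) / (u + 1))) := by
  refine ⟨SWpotential_I_mul, fun X Y u hu => ?_⟩
  have neg_modulus : -((3 - u) / (u + 1)) = (u - 3) / (u + 1) := by
    rw [← neg_div, neg_sub]
  rw [SWpotential_div_div, SWpotential_add_neg_add _ _ hu, SWpotential_I_mul, neg_modulus,
    ofReal_sqrt_two_pow_four]
  ring
end
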